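/- Let (M,ḡ) be a Riemannian manifold with analytic interior (ḡ analytic in suitable coordinates), Σ ⊂ ∂M an open subset of the boundary, and h ∈ C^{ℓ+2,α} a symmetric (0,2)-tensor satisfying the geodesic gauge h(ν,·) = 0 in a collar neighborhood of Σ (ν parallel normal). Then for any integer ℓ ≥ 0, the following two sets of boundary conditions on Σ are equivalent: (i) h^⊤ = 0, A'(h) = 0, and ((∇^k_ν Ric)'(h))^⊤ = 0 for k = 0,...,ℓ; (ii) h = 0, ∇h = 0, and ∇^{k+2}h = 0 on Σ for k = 0,...,ℓ. -/

import Mathlib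

noncomputable section

open scoped BigOperators
open MeasureTheory Filter

/-- Points of the coordinate chart `ℝⁿ`. -/
abbrev Pt (n : ℕ) := Fin n → ℝ

/-- Partial derivative of a scalar function in the `i`-th coordinate direction. -/
def pd {n : ℕ} (i : Fin n) (f : Pt n → ℝ) (x : Pt n) : ℝ :=
  fderiv ℝ f x (Pi.single i 1)

/-- Inverse metric `g^{ij}` (pointwise matrix inverse). -/
def ginv {n : ℕ} (g : Pt n → Fin n → Fin n → ℝ) (x : Pt n) (i j : Fin n) : ℝ :=
  (Matrix.of (g x))⁻¹ i j

/-- Christoffel symbols `Γ^k_{ij}` of the metric `g`. -/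
def chr {n : ℕ} (g : Pt n → Fin n → Fin n → ℝ) (x : Pt n) (k i j : Fin n) : ℝ :=
  (1/2) * ∑ l, ginv g x k l *
    (pd i (fun y => g y j l) x + pd j (fun y => g y i l) x - pd l (fun y => g y i j) x)

/-- Covariant derivative of a covector field: `X_{i;j}`. -/
def cdCov {n : ℕ} (g : Pt n → Fin n → Fin n → ℝ) (X : Pt n → Fin n → ℝ)
    (x : Pt n) (i j : Fin n) : ℝ :=
  pd j (fun y => X y i) x - ∑ k, chr g x k i j * X x k

/-- Covariant derivative of a vector field: `X^i_{;j}`. -/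
def cdVec {n : ℕ} (g : Pt n → Fin n → Fin n → ℝ) (X : Pt n → Fin n → ℝ)
    (x : Pt n) (i j : Fin n) : ℝ :=
  pd j (fun y => X y i) x + ∑ k, chr g x i k j * X x k

/-- Covariant derivative of a symmetric (0,2)-tensor: `h_{ij;k}`. -/
def cd2 {n : ℕ} (g : Pt n → Fin n → Fin n → ℝ) (h : Pt n → Fin n → Fin n → ℝ)
    (x : Pt n) (i j k : Fin n) : ℝ :=
  pd k (fun y => h y i j) x - ∑ l, chr g x l i k * h x l j - ∑ l, chr g x l j k * h x i l

/-- Second covariant derivative of a covector field: `X_{i;jk}`. -/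
def cdCov2 {n : ℕ} (g : Pt n → Fin n → Fin n → ℝ) (X : Pt n → Fin n → ℝ)
    (x : Pt n) (i j k : Fin n) : ℝ :=
  cd2 g (fun y a b => cdCov g X y a b) x i j k

/-- Riemann curvature tensor `R^l_{ijk}`. -/
def riem {n : ℕ} (g : Pt n → Fin n → Fin n → ℝ) (x : Pt n) (l i j k : Fin n) : ℝ :=
  pd j (fun y => chr g y l i k) x - pd k (fun y => chr g y l i j) x
  + ∑ m, chr g x l m j * chr g x m i k - ∑ m, chr g x l m k * chr g x m i j

/-- Riemann curvature with all indices lowered. -/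
def riemLow {n : ℕ} (g : Pt n → Fin n → Fin n → ℝ) (x : Pt n) (a b c d : Fin n) : ℝ :=
  ∑ l, g x a l * riem g x l b c d

/-- Ricci curvature `R_{ij}`. -/
def ric {n : ℕ} (g : Pt n → Fin n → Fin n → ℝ) (x : Pt n) (i j : Fin n) : ℝ :=
  ∑ l, riem g x l i l j

/-- Lower the index of a vector field using `g`. -/
def lowerV {n : ℕ} (g : Pt n → Fin n → Fin n → ℝ) (X : Pt n → Fin n → ℝ)
    (x : Pt n) (i : Fin n) : ℝ :=
  ∑ j, g x i j * X x j

/-- Lie derivative of the metric `g` along the vector field `X`: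
`(L_X g)_{ij} = X_{i;j} + X_{j;i}` (index lowered by `g`). -/
def lieg {n : ℕ} (g : Pt n → Fin n → Fin n → ℝ) (X : Pt n → Fin n → ℝ)
    (x : Pt n) (i j : Fin n) : ℝ :=
  cdCov g (lowerV g X) x i j + cdCov g (lowerV g X) x j i

/-- Hessian `f_{;ij}`. -/
def hess {n : ℕ} (g : Pt n → Fin n → Fin n → ℝ) (f : Pt n → ℝ)
    (x : Pt n) (i j : Fin n) : ℝ :=
  cdCov g (fun y a => pd a f y) x i j

/-- Laplace–Beltrami operator on functions. -/
def lapf {n : ℕ} (g : Pt n → Fin n → Fin n → ℝ) (f : Pt n → ℝ) (x : Pt n) : ℝ :=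
  ∑ i, ∑ j, ginv g x i j * hess g f x i j

/-- Trace of a (0,2)-tensor with respect to `g`. -/
def trT {n : ℕ} (g : Pt n → Fin n → Fin n → ℝ) (h : Pt n → Fin n → Fin n → ℝ)
    (x : Pt n) : ℝ :=
  ∑ i, ∑ j, ginv g x i j * h x i j

/-- Divergence of a (0,2)-tensor, as a covector. -/
def divT {n : ℕ} (g : Pt n → Fin n → Fin n → ℝ) (h : Pt n → Fin n → Fin n → ℝ)
    (x : Pt n) (i : Fin n) : ℝ :=
  ∑ j, ∑ k, ginv g x j k * cd2 g h x i j k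

/-- Bianchi operator `β_g h = -div_g h + (1/2) d (tr_g h)`. -/
def bianchi {n : ℕ} (g : Pt n → Fin n → Fin n → ℝ) (h : Pt n → Fin n → Fin n → ℝ)
    (x : Pt n) (i : Fin n) : ℝ :=
  -divT g h x i + (1/2) * pd i (fun y => trT g h y) x

/-- Gradient vector field `(∇f)^i`. -/
def gradV {n : ℕ} (g : Pt n → Fin n → Fin n → ℝ) (f : Pt n → ℝ)
    (x : Pt n) (i : Fin n) : ℝ :=
  ∑ j, ginv g x i j * pd j f x

/-- The tensor is symmetric. -/
def symT {n : ℕ} (g : Pt n → Fin n → Fin n → ℝ) : Prop :=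
  ∀ x i j, g x i j = g x j i

/-- `g` is pointwise positive definite. -/
def posdef {n : ℕ} (g : Pt n → Fin n → Fin n → ℝ) : Prop :=
  ∀ (x : Pt n) (v : Fin n → ℝ), v ≠ 0 → 0 < ∑ i, ∑ j, g x i j * v i * v j

/-- Smooth componentwise. -/
def smoothT {n : ℕ} (g : Pt n → Fin n → Fin n → ℝ) : Prop :=
  ∀ i j, ContDiff ℝ (⊤ : ℕ∞) (fun x => g x i j)

/-- The lowered tensor `(T_h)_{ijk} = (1/2)(h_{ij;k} + h_{ik;j} - h_{jk;i})`. -/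
def Tlow {n : ℕ} (g : Pt n → Fin n → Fin n → ℝ) (h : Pt n → Fin n → Fin n → ℝ)
    (x : Pt n) (i j k : Fin n) : ℝ :=
  (1/2) * (cd2 g h x i j k + cd2 g h x i k j - cd2 g h x j k i)
/-- Unit normal vector to the level set `{f = 0}` (normalized `g`-gradient of `f`). -/
def nuV {n : ℕ} (g : Pt n → Fin n → Fin n → ℝ) (f : Pt n → ℝ)
    (x : Pt n) (i : Fin n) : ℝ :=
  gradV g f x i / Real.sqrt (∑ j, ∑ k, ginv g x j k * pd j f x * pd k f x)

/-- Ambient second fundamental form of the level set `{f = 0}`: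
symmetrized covariant derivative of the lowered unit normal. -/
def sff {n : ℕ} (g : Pt n → Fin n → Fin n → ℝ) (f : Pt n → ℝ)
    (x : Pt n) (i j : Fin n) : ℝ :=
  (1/2) * (cdCov g (lowerV g (nuV g f)) x i j + cdCov g (lowerV g (nuV g f)) x j i)

/-- Mean curvature of the level set `{f = 0}` (divergence of the unit normal). -/
def hmean {n : ℕ} (g : Pt n → Fin n → Fin n → ℝ) (f : Pt n → ℝ) (x : Pt n) : ℝ :=
  ∑ i, ∑ j, ginv g x i j * cdCov g (lowerV g (nuV g f)) x i j

/-- The perturbed metric `g + s h`. -/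
def mpert {n : ℕ} (g h : Pt n → Fin n → Fin n → ℝ) (s : ℝ) :
    Pt n → Fin n → Fin n → ℝ :=
  fun y a b => g y a b + s * h y a b

/-- Linearized mean curvature `H'|_g(h)`. -/
def hmeanLin {n : ℕ} (g h : Pt n → Fin n → Fin n → ℝ) (f : Pt n → ℝ) (x : Pt n) : ℝ :=
  deriv (fun s : ℝ => hmean (mpert g h s) f x) 0

/-- Linearized second fundamental form `A'|_g(h)`. -/
def sffLin {n : ℕ} (g h : Pt n → Fin n → Fin n → ℝ) (f : Pt n → ℝ)
    (x : Pt n) (i j : Fin n) : ℝ :=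
  deriv (fun s : ℝ => sff (mpert g h s) f x i j) 0

/-- Linearized unit normal `ν'|_g(h)` (a vector field along the level set). -/
def nuLin {n : ℕ} (g h : Pt n → Fin n → Fin n → ℝ) (f : Pt n → ℝ)
    (x : Pt n) (i : Fin n) : ℝ :=
  deriv (fun s : ℝ => nuV (mpert g h s) f x i) 0

/-- Linearized Ricci curvature `Ric'|_g(h)`. -/
def ricLin {n : ℕ} (g h : Pt n → Fin n → Fin n → ℝ) (x : Pt n) (i j : Fin n) : ℝ :=
  deriv (fun s : ℝ => ric (mpert g h s) x i j) 0

/-- A vector `v` is tangent to the level set `{f = 0}` at `x`. -/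
def Tang {n : ℕ} (f : Pt n → ℝ) (x : Pt n) (v : Fin n → ℝ) : Prop :=
  fderiv ℝ f x v = 0
/-- Iterated normal covariant derivative of the Ricci tensor: `∇^k_ν Ric`. -/
def nuRic {n : ℕ} (g : Pt n → Fin n → Fin n → ℝ) (f : Pt n → ℝ) :
    ℕ → Pt n → Fin n → Fin n → ℝ
  | 0 => fun x i j => ric g x i j
  | (k+1) => fun x i j => ∑ l, nuV g f x l * cd2 g (nuRic g f k) x i j l

/-- Linearization of `∇^k_ν Ric` at `g` in the direction `h`. -/
def nuRicLin {n : ℕ} (g h : Pt n → Fin n → Fin n → ℝ) (f : Pt n → ℝ) (k : ℕ)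
    (x : Pt n) (i j : Fin n) : ℝ :=
  deriv (fun s : ℝ => nuRic (mpert g h s) f k x i j) 0

/-- Iterated `∇_ν` (with respect to the fixed background metric) applied
to a (0,2)-tensor. -/
def nuDerIter {n : ℕ} (g : Pt n → Fin n → Fin n → ℝ) (f : Pt n → ℝ) :
    ℕ → (Pt n → Fin n → Fin n → ℝ) → Pt n → Fin n → Fin n → ℝ
  | 0, T => T
  | (k+1), T => fun x i j => ∑ l, nuV g f x l * cd2 g (nuDerIter g f k T) x i j l

/-- Covariant derivative of a rank-`r` covariant tensor (the new index is last). -/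
def cdT {n r : ℕ} (g : Pt n → Fin n → Fin n → ℝ)
    (T : Pt n → (Fin r → Fin n) → ℝ) (x : Pt n) (I : Fin (r+1) → Fin n) : ℝ :=
  pd (I (Fin.last r)) (fun y => T y (fun m => I m.castSucc)) x
  - ∑ m : Fin r, ∑ k, chr g x k (I m.castSucc) (I (Fin.last r)) *
      T x (Function.update (fun m' => I m'.castSucc) m k)

/-- Iterated covariant derivative `∇^m h` of a (0,2)-tensor `h`. -/
def itCDh {n : ℕ} (g h : Pt n → Fin n → Fin n → ℝ) :
    (m : ℕ) → Pt n → (Fin (m+2) → Fin n) → ℝ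
  | 0 => fun x I => h x (I 0) (I 1)
  | (m+1) => fun x I => cdT g (itCDh g h m) x I

/-!
If `h` vanishes on `Σ = {f = 0}` together with its derivatives of order `< m`, then, since partial
derivatives commute, those of order `m` on `Σ` are the components of `H ⊗ df ⊗ ⋯ ⊗ df` for a single
symmetric tensor `H`, the symbol of `h`. A linear differential operator of order `r` acts on such
symbols by its principal symbol and lowers `m` by `r`. In geodesic gauge `H(ν, ·) = 0`, and the
symbols of `A'(h)` and `(∇^k_ν Ric)'(h)` are `½ |df| H` and `-½ |df|^k (|df|² H + tr H df ⊗ df)`.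
Hence the tangential part of either one determines `H^⊤`, which by the gauge is all of `H`. Each
boundary condition therefore raises the order of vanishing of `h` on `Σ` by one, and
`h, ∇h, …, ∇^m h` vanish on `Σ` exactly when all partial derivatives of `h` of order `≤ m` do.
-/

section
open scoped Matrix Topology

variable {n m : ℕ} {f u v : Pt n → ℝ} {x : Pt n}

theorem contDiffAt_pd (i : Fin n) (hu : ContDiffAt ℝ (m + 1 : ℕ) u x) :
    ContDiffAt ℝ m (pd i u) x :=
  (hu.fderiv_right (by norm_cast)).clm_apply contDiffAt_const

theorem pd_eventuallyEq (i : Fin n) (h : u =ᶠ[𝓝 x] v) : pd i u =ᶠ[𝓝 x] pd i v := by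
  filter_upwards [h.fderiv (𝕜 := ℝ)] with y hy
  simp only [pd, hy]

theorem eventually_differentiableAt {E : Type*} [NormedAddCommGroup E] [NormedSpace ℝ E]
    {u : E → ℝ} {x : E} (h : ContDiffAt ℝ (m + 1 : ℕ) u x) :
    ∀ᶠ y in 𝓝 x, DifferentiableAt ℝ u y := by
  filter_upwards [h.eventually (by simp)] with y hy
  exact hy.differentiableAt (by simp)

theorem pd_add (i : Fin n) (hu : DifferentiableAt ℝ u x) (hv : DifferentiableAt ℝ v x) :
    pd i (fun y => u y + v y) x = pd i u x + pd i v x := by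
  simp only [pd, fderiv_fun_add hu hv, add_apply]

theorem pd_mul (i : Fin n) (hu : DifferentiableAt ℝ u x) (hv : DifferentiableAt ℝ v x) :
    pd i (fun y => u y * v y) x = u x * pd i v x + pd i u x * v x := by
  simp only [pd, fderiv_fun_mul hu hv, add_apply,
    smul_apply, smul_eq_mul, mul_comm (v x)]

theorem pd_comm (hu : ContDiffAt ℝ 2 u x) (i j : Fin n) :
    pd i (pd j u) x = pd j (pd i u) x := by
  have hd : DifferentiableAt ℝ (fderiv ℝ u) x :=
    (hu.fderiv_right (m := 1) (by norm_num)).differentiableAt (by simp)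
  have pd_pd (a b : Fin n) : pd a (pd b u) x =
      fderiv ℝ (fderiv ℝ u) x (Pi.single a 1) (Pi.single b 1) := by
    change fderiv ℝ (fun y => fderiv ℝ u y (Pi.single b 1)) x (Pi.single a 1) = _
    rw [fderiv_clm_apply hd (by fun_prop)]
    simp
  rw [pd_pd, pd_pd, hu.isSymmSndFDerivAt (by simp)]

theorem fderiv_apply_eq_sum_pd (f : Pt n → ℝ) (x : Pt n) (v : Fin n → ℝ) :
    fderiv ℝ f x v = ∑ i, v i * pd i f x := by
  conv_lhs => rw [pi_eq_sum_univ' v]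
  simp only [map_sum, map_smul, pd, smul_eq_mul]

theorem exists_pd_ne_zero (h : fderiv ℝ f x ≠ 0) : ∃ i, pd i f x ≠ 0 := by
  contrapose! h
  ext v
  simp [fderiv_apply_eq_sum_pd, h]

/- This is the Lagrange multiplier rule: on `f = 0` the function `u` is constant, so every point of
the level set is a constrained extremum of `u`. -/
theorem exists_pd_eq_pd_mul_of_eq_zero (hf : ContDiffAt ℝ 1 f x) (hfx : fderiv ℝ f x ≠ 0)
    (hu : ContDiffAt ℝ 1 u x) (hu0 : ∀ y, f y = f x → u y = 0) :
    ∃ c, ∀ i, pd i u x = pd i f x * c := by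
  have hextr : IsLocalExtrOn u {y | f y = f x} x := by
    refine Or.inl (mem_of_superset self_mem_nhdsWithin fun y hy => ?_)
    simp [hu0 y hy, hu0 x rfl]
  obtain ⟨a, b, hab, hsum⟩ := hextr.exists_multipliers_of_hasStrictFDerivAt_1d
    (hf.hasStrictFDerivAt (by simp)) (hu.hasStrictFDerivAt (by simp))
  have hpd (i : Fin n) : a * pd i f x + b * pd i u x = 0 := by
    simpa [pd] using congrArg (fun L => L (Pi.single i 1)) hsum
  have hb : b ≠ 0 := by
    rintro rfl
    obtain ⟨i, hi⟩ := exists_pd_ne_zero hfx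
    have ha : a = 0 := by simpa [hi] using hpd i
    exact hab (by rw [ha]; rfl)
  refine ⟨-a / b, fun i => ?_⟩
  field_simp
  linarith [hpd i]

theorem exists_eq_mul_of_mul_comm {ι K : Type*} [Field K] {p s : ι → K} (hp : ∃ j, p j ≠ 0)
    (h : ∀ i j, p j * s i = p i * s j) : ∃ c, ∀ i, s i = p i * c := by
  obtain ⟨j, hj⟩ := hp
  refine ⟨s j / p j, fun i => ?_⟩
  rw [← mul_div_assoc, eq_div_iff hj, mul_comm, h]

/-- `HasSymbol f m u σ`: along the level set `Σ = {f = 0}` the function `u` is `C^m`, its partial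
derivatives of order `< m` vanish, and those of order `m` are the components of `σ • df ⊗ ⋯ ⊗ df`.
In particular `HasSymbol f m u 0` says that `u` vanishes on `Σ` together with all its derivatives
of order at most `m`. -/
def HasSymbol (f : Pt n → ℝ) : ℕ → (Pt n → ℝ) → (Pt n → ℝ) → Prop
  | 0, u, σ => ∀ x, f x = 0 → ContDiffAt ℝ (0 : ℕ) u x ∧ u x = σ x
  | m + 1, u, σ => (∀ x, f x = 0 → ContDiffAt ℝ (m + 1 : ℕ) u x ∧ u x = 0) ∧
      ∀ i, HasSymbol f m (pd i u) (fun x => pd i f x * σ x)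

namespace HasSymbol

variable {m' : ℕ} {σ τ : Pt n → ℝ}

theorem contDiffAt (h : HasSymbol f m u σ) (hx : f x = 0) : ContDiffAt ℝ m u x := by
  cases m with
  | zero => exact (h x hx).1
  | succ m => exact (h.1 x hx).1

theorem congr (h : HasSymbol f m u σ) (huv : ∀ x, f x = 0 → u =ᶠ[𝓝 x] v)
    (hστ : ∀ x, f x = 0 → σ x = τ x) : HasSymbol f m v τ := by
  induction m generalizing u v σ τ with
  | zero =>
    refine fun x hx => ⟨(h x hx).1.congr_of_eventuallyEq (huv x hx).symm, ?_⟩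
    rw [← (huv x hx).eq_of_nhds, (h x hx).2, hστ x hx]
  | succ m ih =>
    refine ⟨fun x hx => ⟨(h.1 x hx).1.congr_of_eventuallyEq (huv x hx).symm, ?_⟩, fun i => ?_⟩
    · rw [← (huv x hx).eq_of_nhds, (h.1 x hx).2]
    · exact ih (h.2 i) (fun x hx => pd_eventuallyEq i (huv x hx))
        fun x hx => by rw [hστ x hx]

theorem congr_symbol (h : HasSymbol f m u σ) (hστ : ∀ x, f x = 0 → σ x = τ x) :
    HasSymbol f m u τ :=
  h.congr (fun _ _ => EventuallyEq.rfl) hστ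

theorem zero (f : Pt n → ℝ) (m : ℕ) : HasSymbol f m 0 0 := by
  induction m with
  | zero => exact fun x _ => ⟨contDiffAt_const, rfl⟩
  | succ m ih =>
    have pd_zero (i : Fin n) : pd i (0 : Pt n → ℝ) = 0 := by
      funext y
      simp [pd]
    exact ⟨fun x _ => ⟨contDiffAt_const, rfl⟩, fun i => ih.congr (by simp [pd_zero]) (by simp)⟩

theorem of_succ (h : HasSymbol f (m + 1) u σ) : HasSymbol f m u 0 := by
  induction m generalizing u σ with
  | zero => exact fun x hx => ⟨(h.1 x hx).1.of_le (by simp), (h.1 x hx).2⟩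
  | succ m ih =>
    exact ⟨fun x hx => ⟨(h.1 x hx).1.of_le (mod_cast m.succ.le_succ), (h.1 x hx).2⟩,
      fun i => (ih (h.2 i)).congr_symbol (by simp)⟩

theorem of_lt (h : HasSymbol f m' u σ) (hm : m < m') : HasSymbol f m u 0 := by
  induction m', hm using Nat.le_induction generalizing σ with
  | base => exact h.of_succ
  | succ k _ ih => exact ih h.of_succ

theorem of_le (h : HasSymbol f m' u 0) (hm : m ≤ m') : HasSymbol f m u 0 := by
  obtain rfl | hm := hm.eq_or_lt
  · exact h
  · exact h.of_lt hm

theorem eq_zero (h : HasSymbol f m u 0) (hx : f x = 0) : u x = 0 :=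
  (h.of_le m.zero_le x hx).2

theorem add (hu : HasSymbol f m u σ) (hv : HasSymbol f m v τ) :
    HasSymbol f m (fun x => u x + v x) (fun x => σ x + τ x) := by
  induction m generalizing u v σ τ with
  | zero =>
    exact fun x hx => ⟨(hu x hx).1.add (hv x hx).1, congrArg₂ _ (hu x hx).2 (hv x hx).2⟩
  | succ m ih =>
    refine ⟨fun x hx => ⟨(hu.1 x hx).1.add (hv.1 x hx).1, ?_⟩, fun i =>
      (ih (hu.2 i) (hv.2 i)).congr (fun x hx => ?_) fun x _ => (mul_add _ _ _).symm⟩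
    · simp only [(hu.1 x hx).2, (hv.1 x hx).2, add_zero]
    · filter_upwards [eventually_differentiableAt (hu.1 x hx).1,
        eventually_differentiableAt (hv.1 x hx).1] with y hu hv
      rw [pd_add i hu hv]

theorem mul_left {a : Pt n → ℝ} (ha : ∀ x, f x = 0 → ContDiffAt ℝ m a x)
    (hu : HasSymbol f m u σ) : HasSymbol f m (fun x => a x * u x) (fun x => a x * σ x) := by
  induction m generalizing u a σ with
  | zero => exact fun x hx => ⟨(ha x hx).mul (hu x hx).1, by simp only [(hu x hx).2]⟩
  | succ m ih =>
    refine ⟨fun x hx => ⟨(ha x hx).mul (hu.1 x hx).1, by simp only [(hu.1 x hx).2, mul_zero]⟩,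
      fun i => ?_⟩
    have ha_pd := ih (fun x hx => (ha x hx).of_le (mod_cast m.le_succ)) (hu.2 i)
    have hpd_u := ih (fun x hx => contDiffAt_pd i (ha x hx)) hu.of_succ
    refine (ha_pd.add hpd_u).congr (fun x hx => ?_) fun x _ => ?_
    · filter_upwards [eventually_differentiableAt (hu.1 x hx).1,
        eventually_differentiableAt (ha x hx)] with y hu ha
      rw [pd_mul i ha hu]
    · simp only [Pi.zero_apply]
      ring

theorem neg (hu : HasSymbol f m u σ) : HasSymbol f m (fun x => -u x) (fun x => -σ x) := by
  simpa using hu.mul_left (a := fun _ => -1) fun _ _ => contDiffAt_const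

theorem sum {ι : Type*} (s : Finset ι) {u σ : ι → Pt n → ℝ}
    (hu : ∀ i, HasSymbol f m (u i) (σ i)) :
    HasSymbol f m (fun x => ∑ i ∈ s, u i x) (fun x => ∑ i ∈ s, σ i x) := by
  classical
  induction s using Finset.induction_on with
  | empty => exact HasSymbol.zero f m
  | insert a s ha ih =>
    simp only [Finset.sum_insert ha]
    exact (hu a).add ih

theorem unique (hx : f x = 0) (hfx : fderiv ℝ f x ≠ 0) (hσ : HasSymbol f m u σ)
    (hτ : HasSymbol f m u τ) : σ x = τ x := by
  induction m generalizing u σ τ with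
  | zero => rw [← (hσ x hx).2, (hτ x hx).2]
  | succ m ih =>
    obtain ⟨i, hi⟩ := exists_pd_ne_zero hfx
    exact mul_left_cancel₀ hi (ih (hσ.2 i) (hτ.2 i))

/- The symbols `s i` of the `∂ᵢu` satisfy `∂ⱼf s i = ∂ᵢf s j` because second derivatives commute,
so `s` is a multiple of `df`. -/
theorem exists_succ (hf : ∀ x, f x = 0 → ContDiffAt ℝ 1 f x)
    (hreg : ∀ x, f x = 0 → fderiv ℝ f x ≠ 0) (hu : HasSymbol f m u 0)
    (hu' : ∀ x, f x = 0 → ContDiffAt ℝ (m + 1 : ℕ) u x) : ∃ σ, HasSymbol f (m + 1) u σ := by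
  induction m generalizing u with
  | zero =>
    have hprop : ∀ x, f x = 0 → ∃ c, ∀ i, pd i u x = pd i f x * c := fun x hx =>
      exists_pd_eq_pd_mul_of_eq_zero (hf x hx) (hreg x hx) (by simpa using hu' x hx)
        fun y hy => (hu y (hy.trans hx)).2
    choose! σ hσ using hprop
    exact ⟨σ, fun x hx => ⟨hu' x hx, (hu x hx).2⟩,
      fun i x hx => ⟨contDiffAt_pd i (hu' x hx), hσ x hx i⟩⟩
  | succ m ih =>
    have hpd (i : Fin n) : ∃ σ, HasSymbol f (m + 1) (pd i u) σ :=
      ih ((hu.2 i).congr_symbol (by simp)) fun x hx => contDiffAt_pd i (hu' x hx)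
    choose s hs using hpd
    have hcomm (x) (hx : f x = 0) (i j : Fin n) : pd j f x * s i x = pd i f x * s j x := by
      refine unique hx (hreg x hx) ((hs i).2 j) (((hs j).2 i).congr (fun y hy => ?_) fun _ _ => rfl)
      have hu2 : ContDiffAt ℝ 2 u y := (hu' y hy).of_le (by norm_cast; omega)
      filter_upwards [hu2.eventually (by simp)] with z hz
      exact pd_comm hz i j
    have hprop : ∀ x, f x = 0 → ∃ c, ∀ i, s i x = pd i f x * c := fun x hx =>
      exists_eq_mul_of_mul_comm (exists_pd_ne_zero (hreg x hx)) (hcomm x hx)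
    choose! σ hσ using hprop
    exact ⟨σ, fun x hx => ⟨hu' x hx, (hu.1 x hx).2⟩,
      fun i => (hs i).congr_symbol fun x hx => hσ x hx i⟩

end HasSymbol

/-- The difference quotient `(F s y - F 0 y) / s` of a one-parameter family of functions, as a
function of `(s, y)`; at `s = 0` it is the linearization `deriv (fun s => F s y) 0`. -/
def diffQuot (F : ℝ → Pt n → ℝ) (p : ℝ × Pt n) : ℝ :=
  dslope (fun s => F s p.2) 0 p.1

theorem eq_add_mul_diffQuot (F : ℝ → Pt n → ℝ) (p : ℝ × Pt n) :
    F p.1 p.2 = F 0 p.2 + p.1 * diffQuot F p := by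
  have h := sub_smul_dslope (fun s => F s p.2) 0 p.1
  rw [sub_zero, smul_eq_mul] at h
  rw [diffQuot, h, add_sub_cancel]

theorem diffQuot_eventuallyEq {F : ℝ → Pt n → ℝ} {Q : ℝ × Pt n → ℝ}
    (hQ : ContDiffAt ℝ m Q (0, x))
    (hF : ∀ᶠ p in 𝓝 ((0 : ℝ), x), F p.1 p.2 = F 0 p.2 + p.1 * Q p) :
    diffQuot F =ᶠ[𝓝 (0, x)] Q := by
  filter_upwards [(hQ.of_le (zero_le (a := (m : WithTop ℕ∞)))).eventually (by simp),
    hF.eventually_nhds] with p hQp hFp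
  obtain ⟨s, y⟩ := p
  have hline : Tendsto (fun r : ℝ => (r, y)) (𝓝 s) (𝓝 (s, y)) :=
    (Continuous.prodMk_left y).tendsto s
  obtain rfl | hs := eq_or_ne s 0
  · suffices HasDerivAt (fun r => F r y) (Q (0, y)) 0 by
      rw [diffQuot, dslope_same, this.deriv]
    rw [hasDerivAt_iff_tendsto_slope_zero]
    refine ((hQp.continuousAt.tendsto.comp hline).mono_left nhdsWithin_le_nhds).congr' ?_
    filter_upwards [self_mem_nhdsWithin, nhdsWithin_le_nhds (hline.eventually hFp)] with r hr hFr
    have hr : r ≠ 0 := hr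
    simp [hFr, hr]
  · rw [diffQuot, dslope_of_ne _ hs, slope_def_field, hFp.self_of_nhds]
    field_simp
    ring

/-- `HasLinSymbol f m F σ`: along `Σ = {f = 0}` the linearization at `s = 0` of the family `F s` has
symbol `σ` of order `m`. Regularity is asked of the difference quotient rather than of `F` jointly
in `(s, y)`, because only then may one differentiate in `s` without losing a derivative in `y`. -/
structure HasLinSymbol (f : Pt n → ℝ) (m : ℕ) (F : ℝ → Pt n → ℝ) (σ : Pt n → ℝ) : Prop where
  contDiffAt_zero : ∀ x, f x = 0 → ContDiffAt ℝ m (F 0) x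
  contDiffAt_diffQuot : ∀ x, f x = 0 → ContDiffAt ℝ m (diffQuot F) (0, x)
  hasSymbol : HasSymbol f m (fun y => diffQuot F (0, y)) σ

theorem contDiffAt_comp_snd (hu : ContDiffAt ℝ m u x) (s : ℝ) :
    ContDiffAt ℝ m (fun p : ℝ × Pt n => u p.2) (s, x) :=
  ContDiffAt.comp (g := u) (s, x) hu contDiffAt_snd

namespace HasLinSymbol

variable {m' : ℕ} {F G : ℝ → Pt n → ℝ} {σ τ : Pt n → ℝ}

theorem of_quotient {Q : ℝ × Pt n → ℝ} (hF0 : ∀ x, f x = 0 → ContDiffAt ℝ m (F 0) x)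
    (hQ : ∀ x, f x = 0 → ContDiffAt ℝ m Q (0, x))
    (hF : ∀ x, f x = 0 → ∀ᶠ p in 𝓝 ((0 : ℝ), x), F p.1 p.2 = F 0 p.2 + p.1 * Q p)
    (hσ : HasSymbol f m (fun y => Q (0, y)) σ) : HasLinSymbol f m F σ := by
  have heq : ∀ x, f x = 0 → diffQuot F =ᶠ[𝓝 (0, x)] Q := fun x hx =>
    diffQuot_eventuallyEq (hQ x hx) (hF x hx)
  refine ⟨hF0, fun x hx => (hQ x hx).congr_of_eventuallyEq (heq x hx),
    hσ.congr (fun x hx => ?_) fun _ _ => rfl⟩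
  exact ((Continuous.prodMk_right (0 : ℝ)).tendsto x).eventually (heq x hx).symm

theorem contDiffAt (hF : HasLinSymbol f m F σ) (hx : f x = 0) :
    ContDiffAt ℝ m (fun p : ℝ × Pt n => F p.1 p.2) (0, x) := by
  rw [funext (eq_add_mul_diffQuot F)]
  exact (contDiffAt_comp_snd (hF.contDiffAt_zero x hx) 0).add
    (contDiffAt_fst.mul (hF.contDiffAt_diffQuot x hx))

theorem deriv_eq (hF : HasLinSymbol f 0 F σ) (hx : f x = 0) :
    deriv (fun s => F s x) 0 = σ x :=
  (dslope_same _ _).symm.trans (hF.hasSymbol x hx).2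

theorem congr_symbol (hF : HasLinSymbol f m F σ) (h : ∀ x, f x = 0 → σ x = τ x) :
    HasLinSymbol f m F τ :=
  ⟨hF.contDiffAt_zero, hF.contDiffAt_diffQuot, hF.hasSymbol.congr_symbol h⟩

theorem of_lt (hF : HasLinSymbol f m' F σ) (hm : m < m') : HasLinSymbol f m F 0 :=
  ⟨fun x hx => (hF.contDiffAt_zero x hx).of_le (mod_cast hm.le),
    fun x hx => (hF.contDiffAt_diffQuot x hx).of_le (mod_cast hm.le), hF.hasSymbol.of_lt hm⟩

theorem const {a : Pt n → ℝ} (ha : ∀ x, f x = 0 → ContDiffAt ℝ m a x) :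
    HasLinSymbol f m (fun _ => a) 0 :=
  of_quotient (Q := 0) ha (fun _ _ => contDiffAt_const) (by simp) (HasSymbol.zero f m)

theorem add (hF : HasLinSymbol f m F σ) (hG : HasLinSymbol f m G τ) :
    HasLinSymbol f m (fun s y => F s y + G s y) (fun x => σ x + τ x) := by
  refine of_quotient (Q := fun p => diffQuot F p + diffQuot G p)
    (fun x hx => (hF.contDiffAt_zero x hx).add (hG.contDiffAt_zero x hx))
    (fun x hx => (hF.contDiffAt_diffQuot x hx).add (hG.contDiffAt_diffQuot x hx))
    (fun x _ => .of_forall fun p => ?_) (hF.hasSymbol.add hG.hasSymbol)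
  rw [eq_add_mul_diffQuot F, eq_add_mul_diffQuot G]
  ring

theorem mul (hF : HasLinSymbol f m F σ) (hG : HasLinSymbol f m G τ) :
    HasLinSymbol f m (fun s y => F s y * G s y) (fun x => F 0 x * τ x + G 0 x * σ x) := by
  refine of_quotient (Q := fun p => F 0 p.2 * diffQuot G p + G p.1 p.2 * diffQuot F p)
    (fun x hx => (hF.contDiffAt_zero x hx).mul (hG.contDiffAt_zero x hx))
    (fun x hx => ?_) (fun x _ => .of_forall fun p => ?_)
    ((hG.hasSymbol.mul_left hF.contDiffAt_zero).add (hF.hasSymbol.mul_left hG.contDiffAt_zero))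
  · exact ((contDiffAt_comp_snd (hF.contDiffAt_zero x hx) 0).mul (hG.contDiffAt_diffQuot x hx)).add
      ((hG.contDiffAt hx).mul (hF.contDiffAt_diffQuot x hx))
  · rw [eq_add_mul_diffQuot F, eq_add_mul_diffQuot G]
    ring

theorem const_mul (c : ℝ) (hF : HasLinSymbol f m F σ) :
    HasLinSymbol f m (fun s y => c * F s y) (fun x => c * σ x) := by
  simpa using (const (a := fun _ => c) fun _ _ => contDiffAt_const).mul hF

theorem sub (hF : HasLinSymbol f m F σ) (hG : HasLinSymbol f m G τ) :
    HasLinSymbol f m (fun s y => F s y - G s y) (fun x => σ x - τ x) := by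
  simpa [sub_eq_add_neg] using hF.add (hG.const_mul (-1))

theorem sum {ι : Type*} (t : Finset ι) {F : ι → ℝ → Pt n → ℝ} {σ : ι → Pt n → ℝ}
    (hF : ∀ i, HasLinSymbol f m (F i) (σ i)) :
    HasLinSymbol f m (fun s x => ∑ i ∈ t, F i s x) (fun x => ∑ i ∈ t, σ i x) := by
  classical
  induction t using Finset.induction_on with
  | empty => exact const (a := fun _ => 0) fun _ _ => contDiffAt_const
  | insert a t ha ih =>
    simp only [Finset.sum_insert ha]
    exact (hF a).add ih

theorem inv (hF : HasLinSymbol f m F σ) (hF0 : ∀ x, f x = 0 → F 0 x ≠ 0) :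
    HasLinSymbol f m (fun s y => (F s y)⁻¹) (fun x => -(F 0 x * F 0 x)⁻¹ * σ x) := by
  have hinv : ∀ x, f x = 0 → ContDiffAt ℝ m (fun y => (F 0 y)⁻¹) x := fun x hx =>
    (hF.contDiffAt_zero x hx).inv (hF0 x hx)
  refine of_quotient (Q := fun p => -(F p.1 p.2 * F 0 p.2)⁻¹ * diffQuot F p) hinv
    (fun x hx => ?_) (fun x hx => ?_) (hF.hasSymbol.mul_left fun x hx => ?_)
  · exact (((hF.contDiffAt hx).mul (contDiffAt_comp_snd (hF.contDiffAt_zero x hx) 0)).inv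
      (mul_ne_zero (hF0 x hx) (hF0 x hx))).neg.mul (hF.contDiffAt_diffQuot x hx)
  · filter_upwards [(hF.contDiffAt hx).continuousAt.eventually_ne (hF0 x hx),
      (contDiffAt_comp_snd (hF.contDiffAt_zero x hx) 0).continuousAt.eventually_ne (hF0 x hx)]
      with p hp hp0
    have hquot := eq_add_mul_diffQuot F p
    field_simp
    linarith
  · exact (((hF.contDiffAt_zero x hx).mul (hF.contDiffAt_zero x hx)).inv
      (mul_ne_zero (hF0 x hx) (hF0 x hx))).neg

theorem sqrt (hF : HasLinSymbol f m F σ) (hF0 : ∀ x, f x = 0 → 0 < F 0 x) :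
    HasLinSymbol f m (fun s y => √(F s y)) (fun x => (√(F 0 x) + √(F 0 x))⁻¹ * σ x) := by
  have hsqrt : ∀ x, f x = 0 → ContDiffAt ℝ m (fun y => √(F 0 y)) x := fun x hx =>
    (hF.contDiffAt_zero x hx).sqrt (hF0 x hx).ne'
  have hsum_pos : ∀ x, f x = 0 → 0 < √(F 0 x) + √(F 0 x) := fun x hx =>
    add_pos (Real.sqrt_pos.2 (hF0 x hx)) (Real.sqrt_pos.2 (hF0 x hx))
  refine of_quotient (Q := fun p => (√(F p.1 p.2) + √(F 0 p.2))⁻¹ * diffQuot F p) hsqrt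
    (fun x hx => ?_) (fun x hx => ?_) (hF.hasSymbol.mul_left fun x hx => ?_)
  · exact ((((hF.contDiffAt hx).sqrt (hF0 x hx).ne').add (contDiffAt_comp_snd (hsqrt x hx) 0)).inv
      (hsum_pos x hx).ne').mul (hF.contDiffAt_diffQuot x hx)
  · filter_upwards [(hF.contDiffAt hx).continuousAt.eventually_const_lt (hF0 x hx),
      (contDiffAt_comp_snd (hF.contDiffAt_zero x hx) 0).continuousAt.eventually_const_lt
        (hF0 x hx)] with p hp hp0
    have hsum : √(F p.1 p.2) + √(F 0 p.2) ≠ 0 :=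
      (add_pos (Real.sqrt_pos.2 hp) (Real.sqrt_pos.2 hp0)).ne'
    have hquot := eq_add_mul_diffQuot F p
    have hsq := Real.sq_sqrt hp.le
    have hsq0 := Real.sq_sqrt hp0.le
    field_simp [hsum]
    linarith
  · exact ((hsqrt x hx).add (hsqrt x hx)).inv (hsum_pos x hx).ne'

theorem partialDeriv (hF : HasLinSymbol f (m + 1) F σ) (i : Fin n) :
    HasLinSymbol f m (fun s => pd i (F s)) (fun x => pd i f x * σ x) := by
  have hpd {p : ℝ × Pt n} (hp : DifferentiableAt ℝ (diffQuot F) p) :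
      HasFDerivAt (fun y => diffQuot F (p.1, y))
        ((fderiv ℝ (diffQuot F) p).comp (ContinuousLinearMap.inr ℝ ℝ (Pt n))) p.2 :=
    HasFDerivAt.comp (g := diffQuot F) p.2 hp.hasFDerivAt (hasFDerivAt_prodMk_right p.1 p.2)
  have pd_diffQuot {p : ℝ × Pt n} (hp : DifferentiableAt ℝ (diffQuot F) p) :
      pd i (fun y => diffQuot F (p.1, y)) p.2 = fderiv ℝ (diffQuot F) p (0, Pi.single i 1) := by
    simp [pd, (hpd hp).fderiv]
  refine of_quotient (Q := fun p => fderiv ℝ (diffQuot F) p (0, Pi.single i 1))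
    (fun x hx => contDiffAt_pd i (hF.contDiffAt_zero x hx))
    (fun x hx => ((hF.contDiffAt_diffQuot x hx).fderiv_right (by norm_cast)).clm_apply
      contDiffAt_const) (fun x hx => ?_) ((hF.hasSymbol.2 i).congr (fun x hx => ?_) fun _ _ => rfl)
  · filter_upwards [eventually_differentiableAt (hF.contDiffAt_diffQuot x hx),
      (continuous_snd.tendsto ((0 : ℝ), x)).eventually
        (eventually_differentiableAt (hF.contDiffAt_zero x hx))] with p hQ hF0
    have hF_eq : F p.1 = fun y => F 0 y + p.1 * diffQuot F (p.1, y) :=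
      funext fun y => eq_add_mul_diffQuot F (p.1, y)
    have hQ' := (hpd hQ).differentiableAt
    rw [← pd_diffQuot hQ, hF_eq, pd_add i hF0 (hQ'.const_mul _),
      pd_mul i (differentiableAt_const p.1) hQ']
    simp [pd]
  · filter_upwards [((Continuous.prodMk_right (0 : ℝ)).tendsto x).eventually
      (eventually_differentiableAt (hF.contDiffAt_diffQuot x hx))] with y hy
    exact pd_diffQuot hy

end HasLinSymbol

section MatrixInverse

variable {ι E : Type*} [Fintype ι] [DecidableEq ι] [NormedAddCommGroup E] [NormedSpace ℝ E]
  {k : WithTop ℕ∞} {A : E → Matrix ι ι ℝ} {p : E}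

theorem contDiffAt_matrix_det (hA : ∀ i j, ContDiffAt ℝ k (fun q => A q i j) p) :
    ContDiffAt ℝ k (fun q => (A q).det) p := by
  simp only [Matrix.det_apply]
  exact ContDiffAt.sum fun σ _ => (contDiffAt_prod fun i _ => hA _ _).const_smul _

theorem contDiffAt_matrix_inv (hA : ∀ i j, ContDiffAt ℝ k (fun q => A q i j) p)
    (hdet : (A p).det ≠ 0) (i j : ι) : ContDiffAt ℝ k (fun q => (A q)⁻¹ i j) p := by
  simp only [Matrix.inv_def, Matrix.smul_apply, smul_eq_mul, Ring.inverse_eq_inv',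
    Matrix.adjugate_apply]
  refine ((contDiffAt_matrix_det hA).inv hdet).mul (contDiffAt_matrix_det fun a b => ?_)
  obtain rfl | haj := eq_or_ne a j
  · simp only [Matrix.updateRow_self]
    exact contDiffAt_const
  · simp only [Matrix.updateRow_ne haj]
    exact hA a b

theorem matrix_inv_add_smul {K : Type*} [Field K] {A B : Matrix ι ι K} {s : K} (hA : A.det ≠ 0)
    (hAB : (A + s • B).det ≠ 0) :
    (A + s • B)⁻¹ = A⁻¹ + s • -((A + s • B)⁻¹ * B * A⁻¹) := by
  have isUnit_of_det_ne_zero {C : Matrix ι ι K} (hC : C.det ≠ 0) : IsUnit C :=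
    C.isUnit_iff_isUnit_det.2 (isUnit_iff_ne_zero.2 hC)
  rw [← sub_eq_iff_eq_add',
    Matrix.inv_sub_inv (iff_of_true (isUnit_of_det_ne_zero hAB) (isUnit_of_det_ne_zero hA))]
  simp only [sub_add_cancel_left, mul_neg, neg_mul, Matrix.mul_smul, Matrix.smul_mul, smul_neg]

theorem HasLinSymbol.matrix_inv {A : ℝ → Pt n → Matrix ι ι ℝ} {σ : Pt n → Matrix ι ι ℝ}
    (hA : ∀ i j, HasLinSymbol f m (fun s y => A s y i j) (fun x => σ x i j))
    (hdet : ∀ x, f x = 0 → (A 0 x).det ≠ 0) (i j : ι) :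
    HasLinSymbol f m (fun s y => (A s y)⁻¹ i j)
      (fun x => -((A 0 x)⁻¹ * σ x * (A 0 x)⁻¹) i j) := by
  let D (p : ℝ × Pt n) : Matrix ι ι ℝ := .of fun a b => diffQuot (fun s y => A s y a b) p
  have hA_eq (p : ℝ × Pt n) : A p.1 p.2 = A 0 p.2 + p.1 • D p := by
    ext a b
    exact eq_add_mul_diffQuot (fun s y => A s y a b) p
  have hA0_inv (a b : ι) (x) (hx : f x = 0) : ContDiffAt ℝ m (fun y => (A 0 y)⁻¹ a b) x :=
    contDiffAt_matrix_inv (fun a b => (hA a b).contDiffAt_zero x hx) (hdet x hx) a b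
  have hA_inv (a b : ι) (x) (hx : f x = 0) :
      ContDiffAt ℝ m (fun p : ℝ × Pt n => (A p.1 p.2)⁻¹ a b) (0, x) :=
    contDiffAt_matrix_inv (fun a b => (hA a b).contDiffAt hx) (hdet x hx) a b
  refine of_quotient (Q := fun p => -((A p.1 p.2)⁻¹ * D p * (A 0 p.2)⁻¹) i j) (hA0_inv i j)
    (fun x hx => ?_) (fun x hx => ?_) ?_
  · simp only [Matrix.mul_apply]
    exact (ContDiffAt.sum fun b _ => (ContDiffAt.sum fun a _ => (hA_inv i a x hx).mul
      ((hA a b).contDiffAt_diffQuot x hx)).mul (contDiffAt_comp_snd (hA0_inv b j x hx) 0)).neg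
  · have hdet_p := (contDiffAt_matrix_det fun a b => (hA a b).contDiffAt hx).continuousAt
    have hdet_0 := (contDiffAt_matrix_det fun a b => (hA a b).contDiffAt_zero x hx).continuousAt
    filter_upwards [hdet_p.eventually_ne (hdet x hx), (continuous_snd.tendsto
      ((0 : ℝ), x)).eventually (hdet_0.eventually_ne (hdet x hx))] with p hp hp0
    rw [hA_eq p] at hp ⊢
    exact congrFun₂ (matrix_inv_add_smul hp0 hp) i j
  · refine (HasSymbol.sum Finset.univ fun b => (HasSymbol.sum Finset.univ fun a =>
      (hA a b).hasSymbol.mul_left (hA0_inv i a)).mul_left (hA0_inv b j)).neg.congr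
      (fun x _ => .of_forall fun y => ?_) fun x _ => ?_ <;>
    simp only [Matrix.mul_apply, mul_comm (∑ _, _), D, Matrix.of_apply]

end MatrixInverse

variable {g h H : Pt n → Fin n → Fin n → ℝ}

/-- The squared length `|df|²` with respect to `g`. -/
def gradNormSq (g : Pt n → Fin n → Fin n → ℝ) (f : Pt n → ℝ) (x : Pt n) : ℝ :=
  ∑ j, ∑ k, ginv g x j k * pd j f x * pd k f x

/-- `IsHypersurface g f m`: the level set `Σ = {f = 0}` is a nondegenerate hypersurface with
`|df|² > 0` for the pseudo-Riemannian metric `g`. The regularity `C^m` of `g` and `C^(m+1)` of `f`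
along `Σ` is what makes the unit normal field `C^m`. -/
structure IsHypersurface (g : Pt n → Fin n → Fin n → ℝ) (f : Pt n → ℝ) (m : ℕ) : Prop where
  contDiffAt_fun : ∀ x, f x = 0 → ContDiffAt ℝ (m + 1 : ℕ) f x
  contDiffAt_metric : ∀ x, f x = 0 → ∀ i j, ContDiffAt ℝ m (fun y => g y i j) x
  metric_symm : ∀ x, f x = 0 → ∀ i j, g x i j = g x j i
  det_ne_zero : ∀ x, f x = 0 → (Matrix.of (g x)).det ≠ 0
  gradNormSq_pos : ∀ x, f x = 0 → 0 < gradNormSq g f x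

theorem sum_gradV_mul_pd (g : Pt n → Fin n → Fin n → ℝ) (f : Pt n → ℝ) (x : Pt n) :
    ∑ i, gradV g f x i * pd i f x = gradNormSq g f x := by
  simp only [gradV, gradNormSq, Finset.sum_mul, mul_right_comm]

theorem sum_nuV_mul_pd (g : Pt n → Fin n → Fin n → ℝ) (f : Pt n → ℝ) (x : Pt n) :
    ∑ i, nuV g f x i * pd i f x = √(gradNormSq g f x) := by
  calc ∑ i, nuV g f x i * pd i f x = gradNormSq g f x / √(gradNormSq g f x) := by
        rw [← sum_gradV_mul_pd, Finset.sum_div, sum_gradV_mul_pd]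
        exact Finset.sum_congr rfl fun i _ => div_mul_eq_mul_div _ _ _
    _ = √(gradNormSq g f x) := Real.div_sqrt

theorem mpert_zero (g h : Pt n → Fin n → Fin n → ℝ) : mpert g h 0 = g := by
  funext y a b
  simp only [mpert, zero_mul, add_zero]

theorem posDef_of_symT_posdef (hg : symT g) (hpos : posdef g) (x : Pt n) :
    (Matrix.of (g x)).PosDef := by
  refine Matrix.PosDef.of_dotProduct_mulVec_pos ?_ fun v hv => ?_
  · ext i j
    simp [hg x j i]
  · refine (hpos x v hv).trans_eq ?_
    simp [dotProduct, Matrix.mulVec, Finset.mul_sum, mul_comm, mul_left_comm]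

theorem gradNormSq_pos_of_posDef (hg : (Matrix.of (g x)).PosDef) (hfx : fderiv ℝ f x ≠ 0) :
    0 < gradNormSq g f x := by
  obtain ⟨i, hi⟩ := exists_pd_ne_zero hfx
  have hpos := hg.inv.dotProduct_mulVec_pos (x := fun i => pd i f x) fun h => hi (congrFun h i)
  refine hpos.trans_eq ?_
  simp [gradNormSq, ginv, dotProduct, Matrix.mulVec, Finset.mul_sum, mul_comm, mul_left_comm]

theorem IsHypersurface.of_posdef (hg : symT g) (hpos : posdef g)
    (hf : ∀ x, f x = 0 → ContDiffAt ℝ (m + 1 : ℕ) f x)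
    (hg_reg : ∀ x, f x = 0 → ∀ i j, ContDiffAt ℝ m (fun y => g y i j) x)
    (hreg : ∀ x, f x = 0 → fderiv ℝ f x ≠ 0) : IsHypersurface g f m where
  contDiffAt_fun := hf
  contDiffAt_metric := hg_reg
  metric_symm x _ := hg x
  det_ne_zero x _ := (posDef_of_symT_posdef hg hpos x).det_pos.ne'
  gradNormSq_pos x hx := gradNormSq_pos_of_posDef (posDef_of_symT_posdef hg hpos x) (hreg x hx)

namespace IsHypersurface

variable {m' : ℕ}

theorem of_le (S : IsHypersurface g f m') (hm : m ≤ m') : IsHypersurface g f m where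
  contDiffAt_fun x hx := (S.contDiffAt_fun x hx).of_le (by norm_cast; omega)
  contDiffAt_metric x hx i j := (S.contDiffAt_metric x hx i j).of_le (mod_cast hm)
  metric_symm := S.metric_symm
  det_ne_zero := S.det_ne_zero
  gradNormSq_pos := S.gradNormSq_pos

theorem fderiv_ne_zero (S : IsHypersurface g f m) (hx : f x = 0) : fderiv ℝ f x ≠ 0 := fun h => by
  simpa [gradNormSq, pd, h] using S.gradNormSq_pos x hx

theorem ginv_symm (S : IsHypersurface g f m) (hx : f x = 0) (i j : Fin n) :
    ginv g x i j = ginv g x j i := by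
  have hsymm : (Matrix.of (g x)).IsSymm := Matrix.IsSymm.ext fun i j => S.metric_symm x hx j i
  exact (hsymm.inv.apply i j).symm

theorem contDiffAt_ginv (S : IsHypersurface g f m) (hx : f x = 0) (i j : Fin n) :
    ContDiffAt ℝ m (fun y => ginv g y i j) x :=
  contDiffAt_matrix_inv (A := fun y => Matrix.of (g y)) (S.contDiffAt_metric x hx)
    (S.det_ne_zero x hx) i j

theorem contDiffAt_chr (S : IsHypersurface g f (m + 1)) (hx : f x = 0) (k i j : Fin n) :
    ContDiffAt ℝ m (fun y => chr g y k i j) x := by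
  have hpd (a b c : Fin n) : ContDiffAt ℝ m (pd a fun y => g y b c) x :=
    contDiffAt_pd a (S.contDiffAt_metric x hx b c)
  exact contDiffAt_const.mul (ContDiffAt.sum fun l _ =>
    ((S.of_le m.le_succ).contDiffAt_ginv hx k l).mul
      (((hpd i j l).add (hpd j i l)).sub (hpd l i j)))

theorem contDiffAt_pd_fun (S : IsHypersurface g f m) (hx : f x = 0) (i : Fin n) :
    ContDiffAt ℝ m (pd i f) x :=
  contDiffAt_pd i (S.contDiffAt_fun x hx)

theorem contDiffAt_nuV (S : IsHypersurface g f m) (hx : f x = 0) (i : Fin n) :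
    ContDiffAt ℝ m (fun y => nuV g f y i) x := by
  have hgrad : ContDiffAt ℝ m (fun y => gradV g f y i) x :=
    ContDiffAt.sum fun j _ => (S.contDiffAt_ginv hx i j).mul (S.contDiffAt_pd_fun hx j)
  have hnorm : ContDiffAt ℝ m (gradNormSq g f) x :=
    ContDiffAt.sum fun j _ => ContDiffAt.sum fun k _ =>
      ((S.contDiffAt_ginv hx j k).mul (S.contDiffAt_pd_fun hx j)).mul (S.contDiffAt_pd_fun hx k)
  have hpos := S.gradNormSq_pos x hx
  exact hgrad.div (hnorm.sqrt hpos.ne') (Real.sqrt_pos.2 hpos).ne'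

theorem lowerV_nuV (S : IsHypersurface g f m) (hx : f x = 0) (i : Fin n) :
    lowerV g (nuV g f) x i = (√(gradNormSq g f x))⁻¹ * pd i f x := by
  have hinv := Matrix.mul_nonsing_inv _ (isUnit_iff_ne_zero.2 (S.det_ne_zero x hx))
  have hlower : Matrix.of (g x) *ᵥ gradV g f x = fun j => pd j f x := by
    change Matrix.of (g x) *ᵥ ((Matrix.of (g x))⁻¹ *ᵥ fun j => pd j f x) = _
    rw [Matrix.mulVec_mulVec, hinv, Matrix.one_mulVec]
  calc lowerV g (nuV g f) x i = (√(gradNormSq g f x))⁻¹ * (Matrix.of (g x) *ᵥ gradV g f x) i := by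
        simp only [Matrix.mulVec, dotProduct, Finset.mul_sum]
        refine Finset.sum_congr rfl fun j _ => ?_
        rw [nuV, ← gradNormSq, div_eq_inv_mul]
        exact mul_left_comm _ _ _
    _ = (√(gradNormSq g f x))⁻¹ * pd i f x := by rw [hlower]

theorem hasLinSymbol_mpert (S : IsHypersurface g f m)
    (hH : ∀ i j, HasSymbol f m (fun y => h y i j) (fun x => H x i j)) (i j : Fin n) :
    HasLinSymbol f m (fun s y => mpert g h s y i j) (fun x => H x i j) := by
  refine .of_quotient (Q := fun p => h p.2 i j) (fun x hx => ?_)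
    (fun x hx => contDiffAt_comp_snd ((hH i j).contDiffAt hx) 0)
    (fun x _ => .of_forall fun p => ?_) (hH i j)
  · rw [mpert_zero]
    exact S.contDiffAt_metric x hx i j
  · rw [mpert_zero, mpert]

theorem hasLinSymbol_ginv (S : IsHypersurface g f m)
    (hH : ∀ i j, HasSymbol f m (fun y => h y i j) (fun x => H x i j)) (i j : Fin n) :
    HasLinSymbol f m (fun s y => ginv (mpert g h s) y i j)
      (fun x => -((Matrix.of (g x))⁻¹ * Matrix.of (H x) * (Matrix.of (g x))⁻¹) i j) := by
  refine (HasLinSymbol.matrix_inv (A := fun s y => Matrix.of (mpert g h s y))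
    (σ := fun x => Matrix.of (H x)) (S.hasLinSymbol_mpert hH) (fun x hx => ?_) i j).congr_symbol
      fun x _ => by rw [mpert_zero]
  rw [mpert_zero]
  exact S.det_ne_zero x hx

end IsHypersurface

/-- The symbol of order `m` of the linearized Christoffel symbols of `g`, when the perturbation of
the metric has symbol `H` of order `m + 1`. -/
def chrSymbol (g : Pt n → Fin n → Fin n → ℝ) (f : Pt n → ℝ) (H : Pt n → Fin n → Fin n → ℝ)
    (x : Pt n) (k i j : Fin n) : ℝ :=
  (1/2) * ∑ l, ginv g x k l * (pd i f x * H x j l + pd j f x * H x i l - pd l f x * H x i j)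

theorem IsHypersurface.hasLinSymbol_chr (S : IsHypersurface g f (m + 1))
    (hH : ∀ i j, HasSymbol f (m + 1) (fun y => h y i j) (fun x => H x i j)) (k i j : Fin n) :
    HasLinSymbol f m (fun s y => chr (mpert g h s) y k i j)
      (fun x => chrSymbol g f H x k i j) := by
  have hpd (a b c : Fin n) := (S.hasLinSymbol_mpert hH b c).partialDeriv a
  have hginv (l : Fin n) := (S.hasLinSymbol_ginv hH k l).of_lt m.lt_succ_self
  refine ((HasLinSymbol.sum Finset.univ fun l => (hginv l).mul
    (((hpd i j l).add (hpd j i l)).sub (hpd l i j))).const_mul (1/2)).congr_symbol fun x _ => ?_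
  simp only [chrSymbol, mpert_zero, Pi.zero_apply, mul_zero, add_zero]

theorem IsHypersurface.hasLinSymbol_riem (S : IsHypersurface g f (m + 2))
    (hH : ∀ i j, HasSymbol f (m + 2) (fun y => h y i j) (fun x => H x i j)) (l i j k : Fin n) :
    HasLinSymbol f m (fun s y => riem (mpert g h s) y l i j k)
      (fun x => pd j f x * chrSymbol g f H x l i k - pd k f x * chrSymbol g f H x l i j) := by
  have hchr (a b c : Fin n) := S.hasLinSymbol_chr hH a b c
  have hchr_lower (a b c : Fin n) := (hchr a b c).of_lt m.lt_succ_self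
  refine (((((hchr l i k).partialDeriv j).sub ((hchr l i j).partialDeriv k)).add
    (.sum Finset.univ fun a => (hchr_lower l a j).mul (hchr_lower a i k))).sub
    (.sum Finset.univ fun a => (hchr_lower l a k).mul (hchr_lower a i j))).congr_symbol
      fun x _ => ?_
  simp only [Pi.zero_apply, mul_zero, add_zero, Finset.sum_const_zero, sub_zero]

/-- `IsGeodesicGauge g h f m`: near `Σ = {f = 0}` the symmetric tensor `h` is annihilated by the
unit normal `ν`, and `h` is `C^m` along `Σ`. -/
structure IsGeodesicGauge (g h : Pt n → Fin n → Fin n → ℝ) (f : Pt n → ℝ) (m : ℕ) : Prop where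
  contDiffAt : ∀ x, f x = 0 → ∀ i j, ContDiffAt ℝ m (fun y => h y i j) x
  symm : ∀ x, f x = 0 → ∀ i j, (fun y => h y i j) =ᶠ[𝓝 x] fun y => h y j i
  sum_mul_nuV : ∀ x, f x = 0 → ∀ i, ∀ᶠ y in 𝓝 x, ∑ j, h y i j * nuV g f y j = 0

/-- `HasGaugedSymbol g h f m H`: the components of `h` have symbols `H` of order `m`, and `H`
inherits the algebraic properties of a tensor in geodesic gauge. -/
structure HasGaugedSymbol (g h : Pt n → Fin n → Fin n → ℝ) (f : Pt n → ℝ) (m : ℕ)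
    (H : Pt n → Fin n → Fin n → ℝ) : Prop where
  hasSymbol : ∀ i j, HasSymbol f m (fun y => h y i j) (fun x => H x i j)
  symm : ∀ x, f x = 0 → ∀ i j, H x i j = H x j i
  sum_mul_gradV : ∀ x, f x = 0 → ∀ i, ∑ j, H x i j * gradV g f x j = 0

theorem IsGeodesicGauge.hasGaugedSymbol (G : IsGeodesicGauge g h f m) (S : IsHypersurface g f m)
    (hH : ∀ i j, HasSymbol f m (fun y => h y i j) (fun x => H x i j)) :
    HasGaugedSymbol g h f m H where
  hasSymbol := hH
  symm x hx i j := HasSymbol.unique hx (S.fderiv_ne_zero hx) (hH i j)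
    ((hH j i).congr (fun y hy => G.symm y hy j i) fun _ _ => rfl)
  sum_mul_gradV x hx i := by
    have hsum := HasSymbol.sum Finset.univ fun j =>
      (hH i j).mul_left fun x hx => S.contDiffAt_nuV hx j
    have hzero : HasSymbol f m (fun y => ∑ j, nuV g f y j * h y i j) 0 := by
      refine (HasSymbol.zero f m).congr (fun y hy => ?_) fun _ _ => rfl
      filter_upwards [G.sum_mul_nuV y hy i] with z hz
      simpa only [mul_comm, Pi.zero_apply] using hz.symm
    have hν : ∑ j, nuV g f x j * H x i j = 0 :=
      HasSymbol.unique hx (S.fderiv_ne_zero hx) hsum hzero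
    have hsqrt : √(gradNormSq g f x) ≠ 0 := (Real.sqrt_pos.2 (S.gradNormSq_pos x hx)).ne'
    have hgrad (j : Fin n) : gradV g f x j = √(gradNormSq g f x) * nuV g f x j :=
      (mul_div_cancel₀ _ hsqrt).symm
    simp only [hgrad, mul_comm (H x i _), mul_assoc, ← Finset.mul_sum, hν, mul_zero]

namespace HasGaugedSymbol

theorem sum_pd_mul_chrSymbol (D : HasGaugedSymbol g h f m H) (S : IsHypersurface g f m)
    (hx : f x = 0) (i j : Fin n) :
    ∑ l, pd l f x * chrSymbol g f H x l i j = -(1/2) * (gradNormSq g f x * H x i j) := by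
  have hraise (p : Fin n) : ∑ l, pd l f x * ginv g x l p = gradV g f x p := by
    simp only [gradV, S.ginv_symm hx p, mul_comm]
  calc ∑ l, pd l f x * chrSymbol g f H x l i j
      = (1/2) * ∑ p, gradV g f x p *
          (pd i f x * H x j p + pd j f x * H x i p - pd p f x * H x i j) := by
        simp only [chrSymbol, ← hraise, Finset.mul_sum, Finset.sum_mul]
        rw [Finset.sum_comm]
        exact Finset.sum_congr rfl fun p _ => Finset.sum_congr rfl fun l _ => by ring
    _ = (1/2) * (pd i f x * ∑ p, H x j p * gradV g f x p +
          pd j f x * ∑ p, H x i p * gradV g f x p -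
          (∑ p, gradV g f x p * pd p f x) * H x i j) := by
        simp only [Finset.mul_sum, Finset.sum_mul, ← Finset.sum_add_distrib,
          ← Finset.sum_sub_distrib]
        exact Finset.sum_congr rfl fun p _ => by ring
    _ = -(1/2) * (gradNormSq g f x * H x i j) := by
        rw [D.sum_mul_gradV x hx, D.sum_mul_gradV x hx, sum_gradV_mul_pd]
        ring

end HasGaugedSymbol

theorem IsHypersurface.sum_chrSymbol (S : IsHypersurface g f m) (hx : f x = 0) (i : Fin n) :
    ∑ l, chrSymbol g f H x l i l = (1/2) * (pd i f x * trT g H x) := by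
  have hswap : ∑ l, ∑ p, ginv g x l p * (pd l f x * H x i p) =
      ∑ l, ∑ p, ginv g x l p * (pd p f x * H x i l) := by
    rw [Finset.sum_comm]
    simp only [S.ginv_symm hx]
  calc ∑ l, chrSymbol g f H x l i l
      = (1/2) * (pd i f x * trT g H x + (∑ l, ∑ p, ginv g x l p * (pd l f x * H x i p) -
          ∑ l, ∑ p, ginv g x l p * (pd p f x * H x i l))) := by
        simp only [chrSymbol, trT, Finset.mul_sum, ← Finset.sum_add_distrib,
          ← Finset.sum_sub_distrib]
        exact Finset.sum_congr rfl fun l _ => Finset.sum_congr rfl fun p _ => by ring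
    _ = (1/2) * (pd i f x * trT g H x) := by rw [hswap, sub_self, add_zero]

/-- The symbol `-½ (|df|² H + tr H df ⊗ df)` of order `m` of the linearized Ricci tensor of `g`,
when the perturbation of the metric is in geodesic gauge with symbol `H` of order `m + 2`. -/
def ricSymbol (g : Pt n → Fin n → Fin n → ℝ) (f : Pt n → ℝ) (H : Pt n → Fin n → Fin n → ℝ)
    (x : Pt n) (i j : Fin n) : ℝ :=
  -(1/2) * (gradNormSq g f x * H x i j + trT g H x * (pd i f x * pd j f x))

namespace HasGaugedSymbol

variable {k : ℕ}

theorem hasLinSymbol_ric (D : HasGaugedSymbol g h f (m + 2) H) (S : IsHypersurface g f (m + 2))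
    (i j : Fin n) : HasLinSymbol f m (fun s y => ric (mpert g h s) y i j)
      (fun x => ricSymbol g f H x i j) := by
  refine (HasLinSymbol.sum Finset.univ fun l =>
    S.hasLinSymbol_riem D.hasSymbol l i l j).congr_symbol fun x hx => ?_
  rw [Finset.sum_sub_distrib, D.sum_pd_mul_chrSymbol S hx, ← Finset.mul_sum, S.sum_chrSymbol hx,
    ricSymbol]
  ring

theorem hasLinSymbol_gradV (D : HasGaugedSymbol g h f m H) (S : IsHypersurface g f m)
    (i : Fin n) : HasLinSymbol f m (fun s y => gradV (mpert g h s) f y i) 0 := by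
  refine (HasLinSymbol.sum Finset.univ fun j => (S.hasLinSymbol_ginv D.hasSymbol i j).mul
    (.const fun x hx => S.contDiffAt_pd_fun hx j)).congr_symbol fun x hx => ?_
  have hker : Matrix.of (H x) *ᵥ ((Matrix.of (g x))⁻¹ *ᵥ fun j => pd j f x) = 0 :=
    funext (D.sum_mul_gradV x hx)
  have hsymbol : ((Matrix.of (g x))⁻¹ * Matrix.of (H x) * (Matrix.of (g x))⁻¹) *ᵥ
      (fun j => pd j f x) = 0 := by
    rw [← Matrix.mulVec_mulVec, ← Matrix.mulVec_mulVec, hker, Matrix.mulVec_zero]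
  simpa [Matrix.mulVec, dotProduct, mul_comm] using congrFun hsymbol i

theorem hasLinSymbol_nuV (D : HasGaugedSymbol g h f m H) (S : IsHypersurface g f m)
    (i : Fin n) : HasLinSymbol f m (fun s y => nuV (mpert g h s) f y i) 0 := by
  have hnorm : HasLinSymbol f m (fun s => gradNormSq (mpert g h s) f) 0 := by
    simp only [← funext (sum_gradV_mul_pd _ f)]
    refine (HasLinSymbol.sum Finset.univ fun j => (D.hasLinSymbol_gradV S j).mul
      (.const fun x hx => S.contDiffAt_pd_fun hx j)).congr_symbol fun x _ => ?_
    simp only [Pi.zero_apply, mul_zero, add_zero, Finset.sum_const_zero]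
  have hpos : ∀ x, f x = 0 → 0 < gradNormSq (mpert g h 0) f x := by
    simpa only [mpert_zero] using S.gradNormSq_pos
  refine ((D.hasLinSymbol_gradV S i).mul ((hnorm.sqrt hpos).inv fun x hx =>
    (Real.sqrt_pos.2 (hpos x hx)).ne')).congr_symbol fun x _ => ?_
  simp only [Pi.zero_apply, mul_zero, add_zero]

theorem hasLinSymbol_lowerV_nuV (D : HasGaugedSymbol g h f m H) (S : IsHypersurface g f m)
    (i : Fin n) :
    HasLinSymbol f m (fun s y => lowerV (mpert g h s) (nuV (mpert g h s) f) y i) 0 := by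
  refine (HasLinSymbol.sum Finset.univ fun j => (S.hasLinSymbol_mpert D.hasSymbol i j).mul
    (D.hasLinSymbol_nuV S j)).congr_symbol fun x hx => ?_
  simp only [Pi.zero_apply, mul_zero, zero_add, mpert_zero, nuV, div_mul_eq_mul_div]
  rw [← Finset.sum_div, ← zero_div √(gradNormSq g f x), ← D.sum_mul_gradV x hx i]
  simp only [mul_comm, gradNormSq]

theorem hasLinSymbol_sff (D : HasGaugedSymbol g h f (m + 1) H) (S : IsHypersurface g f (m + 1))
    (i j : Fin n) : HasLinSymbol f m (fun s y => sff (mpert g h s) f y i j)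
      (fun x => (1/2) * √(gradNormSq g f x) * H x i j) := by
  have hcdCov (i j : Fin n) : HasLinSymbol f m
      (fun s y => cdCov (mpert g h s) (lowerV (mpert g h s) (nuV (mpert g h s) f)) y i j)
      (fun x => (1/2) * √(gradNormSq g f x) * H x i j) := by
    refine (((D.hasLinSymbol_lowerV_nuV S i).partialDeriv j).sub (.sum Finset.univ fun k =>
      (S.hasLinSymbol_chr D.hasSymbol k i j).mul
        ((D.hasLinSymbol_lowerV_nuV S k).of_lt m.lt_succ_self))).congr_symbol fun x hx => ?_
    simp only [Pi.zero_apply, mul_zero, zero_add, zero_sub, mpert_zero, S.lowerV_nuV hx, mul_assoc,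
      ← Finset.mul_sum, D.sum_pd_mul_chrSymbol S hx]
    have hsqrt := Real.sqrt_pos.2 (S.gradNormSq_pos x hx)
    have hsq := Real.mul_self_sqrt (S.gradNormSq_pos x hx).le
    field_simp
    linear_combination (-H x i j) * hsq
  refine (((hcdCov i j).add (hcdCov j i)).const_mul (1/2)).congr_symbol fun x hx => ?_
  rw [D.symm x hx j i]
  ring

theorem hasLinSymbol_nuRic (D : HasGaugedSymbol g h f (m + k + 2) H)
    (S : IsHypersurface g f (m + k + 2)) (i j : Fin n) :
    HasLinSymbol f m (fun s y => nuRic (mpert g h s) f k y i j)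
      (fun x => √(gradNormSq g f x) ^ k * ricSymbol g f H x i j) := by
  induction k generalizing m i j with
  | zero => simpa only [nuRic, pow_zero, one_mul] using D.hasLinSymbol_ric S i j
  | succ k ih =>
    have hν (l : Fin n) := (D.hasLinSymbol_nuV S l).of_lt (m := m) (by omega)
    have hΓ (a b c : Fin n) :=
      (S.hasLinSymbol_chr D.hasSymbol a b c).of_lt (m := m) (by omega)
    rw [show m + (k + 1) + 2 = m + 1 + k + 2 by ring] at D S
    have hlower (a b : Fin n) := (ih D S a b).of_lt m.lt_succ_self
    refine (HasLinSymbol.sum Finset.univ fun l => (hν l).mul ((((ih D S i j).partialDeriv l).sub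
      (.sum Finset.univ fun p => (hΓ p i l).mul (hlower p j))).sub
      (.sum Finset.univ fun p => (hΓ p j l).mul (hlower i p)))).congr_symbol fun x _ => ?_
    simp only [Pi.zero_apply, mul_zero, add_zero, Finset.sum_const_zero, sub_zero, mpert_zero]
    rw [pow_succ', ← sum_nuV_mul_pd, Finset.sum_mul, Finset.sum_mul]
    exact Finset.sum_congr rfl fun l _ => by ring

end HasGaugedSymbol

theorem bilinForm_eq_zero_of_ker {K V : Type*} [Field K] [AddCommGroup V] [Module K V]
    {B : LinearMap.BilinForm K V} (hB : B.IsSymm) {L : V →ₗ[K] K} {N : V} (hLN : L N ≠ 0)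
    (hBN : B N = 0) (h : ∀ v w, L v = 0 → L w = 0 → B v w = 0) : B = 0 := by
  let tang (v : V) : V := v - (L v / L N) • N
  have hL (v : V) : L (tang v) = 0 := by simp [tang, hLN]
  have hBN' (v : V) : B v N = 0 := by rw [← hB.eq, hBN]; rfl
  ext v w
  calc B v w = B (tang v) (tang w) := by simp [tang, hBN, hBN']
    _ = 0 := h _ _ (hL v) (hL w)

/-- The tangential part at `x` of the `(0,2)`-tensor `T` along the level set of `f` through `x`
vanishes, `T^⊤ = 0`. -/
def TangVanishes (f : Pt n → ℝ) (x : Pt n) (T : Fin n → Fin n → ℝ) : Prop :=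
  ∀ v w : Fin n → ℝ, Tang f x v → Tang f x w → ∑ i, ∑ j, T i j * v i * w j = 0

theorem tangVanishes_const_mul_iff {T : Fin n → Fin n → ℝ} {c : ℝ} (hc : c ≠ 0) :
    TangVanishes f x (fun i j => c * T i j) ↔ TangVanishes f x T := by
  simp only [TangVanishes, mul_assoc, ← Finset.mul_sum, mul_eq_zero, hc, false_or]

theorem tangVanishes_add_conormal_iff {T : Fin n → Fin n → ℝ} (c : ℝ) :
    TangVanishes f x (fun i j => T i j + c * (pd i f x * pd j f x)) ↔ TangVanishes f x T := by
  refine forall₄_congr fun v w hv _ => ?_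
  have hconormal : ∑ i, ∑ j, c * (pd i f x * pd j f x) * v i * w j = 0 := by
    calc ∑ i, ∑ j, c * (pd i f x * pd j f x) * v i * w j
        = c * ((∑ i, v i * pd i f x) * (∑ j, w j * pd j f x)) := by
          rw [Finset.sum_mul_sum]
          simp only [Finset.mul_sum]
          exact Finset.sum_congr rfl fun i _ => Finset.sum_congr rfl fun j _ => by ring
      _ = 0 := by rw [← fderiv_apply_eq_sum_pd, show fderiv ℝ f x v = 0 from hv, zero_mul, mul_zero]
  simp only [add_mul, Finset.sum_add_distrib, hconormal, add_zero]

theorem tangVanishes_ricSymbol_iff (hx : gradNormSq g f x ≠ 0) :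
    TangVanishes f x (ricSymbol g f H x) ↔ TangVanishes f x (H x) := by
  unfold ricSymbol
  rw [tangVanishes_const_mul_iff (by norm_num), tangVanishes_add_conormal_iff,
    tangVanishes_const_mul_iff hx]

namespace HasGaugedSymbol

variable {k : ℕ}

theorem tangVanishes_sffLin_iff (D : HasGaugedSymbol g h f 1 H) (S : IsHypersurface g f 1)
    (hx : f x = 0) : TangVanishes f x (sffLin g h f x) ↔ TangVanishes f x (H x) := by
  have hsff : sffLin g h f x = fun i j => (1/2) * √(gradNormSq g f x) * H x i j :=
    funext₂ fun i j => (D.hasLinSymbol_sff S i j).deriv_eq hx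
  have hsqrt := Real.sqrt_pos.2 (S.gradNormSq_pos x hx)
  rw [hsff, tangVanishes_const_mul_iff (by positivity)]

theorem tangVanishes_nuRicLin_iff (D : HasGaugedSymbol g h f (k + 2) H)
    (S : IsHypersurface g f (k + 2)) (hx : f x = 0) :
    TangVanishes f x (nuRicLin g h f k x) ↔ TangVanishes f x (H x) := by
  have hpos := S.gradNormSq_pos x hx
  have hsqrt := Real.sqrt_pos.2 hpos
  rw [← Nat.zero_add k] at D S
  have hnuRic : nuRicLin g h f k x =
      fun i j => √(gradNormSq g f x) ^ k * ricSymbol g f H x i j :=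
    funext₂ fun i j => (D.hasLinSymbol_nuRic S i j).deriv_eq hx
  rw [hnuRic, tangVanishes_const_mul_iff (by positivity), tangVanishes_ricSymbol_iff hpos.ne']

theorem eq_zero_of_tangVanishes (D : HasGaugedSymbol g h f m H) (S : IsHypersurface g f m)
    (hx : f x = 0) (hH : TangVanishes f x (H x)) : H x = 0 := by
  let B : LinearMap.BilinForm ℝ (Fin n → ℝ) := Matrix.toBilin' (Matrix.of (H x))
  have hB_symm : B.IsSymm :=
    Matrix.isSymm_toBilin'_iff_isSymm.2 (Matrix.IsSymm.ext fun i j => D.symm x hx j i)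
  have hN : fderiv ℝ f x (gradV g f x) ≠ 0 := by
    rw [fderiv_apply_eq_sum_pd, sum_gradV_mul_pd]
    exact (S.gradNormSq_pos x hx).ne'
  have hB_grad : B (gradV g f x) = 0 := by
    ext j
    have := D.sum_mul_gradV x hx j
    simpa [B, Matrix.toBilin'_apply, D.symm x hx, mul_comm, Pi.single_apply] using this
  have hB_tang (v w : Fin n → ℝ) (hv : fderiv ℝ f x v = 0) (hw : fderiv ℝ f x w = 0) :
      B v w = 0 := by
    simpa [B, Matrix.toBilin'_apply, mul_comm] using hH v w hv hw
  have hB : B = 0 :=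
    bilinForm_eq_zero_of_ker (L := (fderiv ℝ f x).toLinearMap) hB_symm hN hB_grad hB_tang
  exact Matrix.of.injective (Matrix.toBilin'.injective (hB.trans (map_zero _).symm))

end HasGaugedSymbol

theorem IsGeodesicGauge.of_le (G : IsGeodesicGauge g h f m) {m' : ℕ} (hm : m' ≤ m) :
    IsGeodesicGauge g h f m' :=
  ⟨fun x hx i j => (G.contDiffAt x hx i j).of_le (mod_cast hm), G.symm, G.sum_mul_nuV⟩

theorem IsGeodesicGauge.hasSymbol_zero_iff (G : IsGeodesicGauge g h f 0)
    (S : IsHypersurface g f 0) :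
    (∀ i j, HasSymbol f 0 (fun y => h y i j) 0) ↔ ∀ x, f x = 0 → TangVanishes f x (h x) := by
  have D : HasGaugedSymbol g h f 0 h :=
    G.hasGaugedSymbol S fun i j x hx => ⟨G.contDiffAt x hx i j, rfl⟩
  constructor
  · intro h0 x hx v w _ _
    simp [(h0 _ _).eq_zero hx]
  · intro htang i j x hx
    exact ⟨G.contDiffAt x hx i j, congrFun₂ (D.eq_zero_of_tangVanishes S hx (htang x hx)) i j⟩

theorem IsGeodesicGauge.hasSymbol_succ_iff (G : IsGeodesicGauge g h f (m + 1))
    (S : IsHypersurface g f (m + 1)) {T : Pt n → Fin n → Fin n → ℝ}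
    (hT : ∀ H, HasGaugedSymbol g h f (m + 1) H → ∀ x, f x = 0 →
      (TangVanishes f x (T x) ↔ TangVanishes f x (H x))) :
    (∀ i j, HasSymbol f (m + 1) (fun y => h y i j) 0) ↔
      (∀ i j, HasSymbol f m (fun y => h y i j) 0) ∧ ∀ x, f x = 0 → TangVanishes f x (T x) := by
  constructor
  · intro h0
    have D : HasGaugedSymbol g h f (m + 1) 0 := G.hasGaugedSymbol S h0
    exact ⟨fun i j => (h0 i j).of_succ, fun x hx => (hT 0 D x hx).2 fun v w _ _ => by simp⟩
  · rintro ⟨h0, htang⟩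
    have hσ (i j : Fin n) : ∃ σ, HasSymbol f (m + 1) (fun y => h y i j) σ :=
      HasSymbol.exists_succ (fun x hx => (S.contDiffAt_fun x hx).of_le (by simp))
        (fun x hx => S.fderiv_ne_zero hx) (h0 i j) fun x hx => G.contDiffAt x hx i j
    choose σ hσ using hσ
    have D : HasGaugedSymbol g h f (m + 1) fun x i j => σ i j x := G.hasGaugedSymbol S hσ
    refine fun i j => (hσ i j).congr_symbol fun x hx => ?_
    exact congrFun₂ (D.eq_zero_of_tangVanishes S hx ((hT _ D x hx).1 (htang x hx))) i j

theorem IsGeodesicGauge.tangVanishes_iff_hasSymbol (G : IsGeodesicGauge g h f (m + 1))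
    (S : IsHypersurface g f (m + 1)) :
    ((∀ x, f x = 0 → TangVanishes f x (h x)) ∧
      (∀ x, f x = 0 → TangVanishes f x (sffLin g h f x)) ∧
      ∀ k < m, ∀ x, f x = 0 → TangVanishes f x (nuRicLin g h f k x)) ↔
    ∀ i j, HasSymbol f (m + 1) (fun y => h y i j) 0 := by
  induction m with
  | zero =>
    rw [G.hasSymbol_succ_iff S fun H D x hx => D.tangVanishes_sffLin_iff S hx,
      (G.of_le zero_le_one).hasSymbol_zero_iff (S.of_le zero_le_one)]
    simp
  | succ m ih =>
    rw [G.hasSymbol_succ_iff S fun H D x hx => D.tangVanishes_nuRicLin_iff S hx,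
      ← ih (G.of_le (m + 1).le_succ) (S.of_le (m + 1).le_succ), Nat.forall_lt_succ_right]
    simp only [and_assoc]

theorem cdT_snoc {r : ℕ} (g : Pt n → Fin n → Fin n → ℝ) (T : Pt n → (Fin r → Fin n) → ℝ)
    (x : Pt n) (I : Fin r → Fin n) (i : Fin n) :
    cdT g T x (Fin.snoc (α := fun _ => Fin n) I i) = pd i (fun y => T y I) x -
      ∑ a, ∑ k, chr g x k (I a) i * T x (Function.update I a k) := by
  simp only [cdT, Fin.snoc_last, Fin.snoc_castSucc]

namespace IsHypersurface

variable {r j : ℕ} {T : Pt n → (Fin r → Fin n) → ℝ}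

theorem contDiffAt_cdT (S : IsHypersurface g f (m + 1)) (hx : f x = 0)
    (hT : ∀ I, ContDiffAt ℝ (m + 1 : ℕ) (fun y => T y I) x) (I : Fin (r + 1) → Fin n) :
    ContDiffAt ℝ m (fun y => cdT g T y I) x :=
  (contDiffAt_pd _ (hT _)).sub (ContDiffAt.sum fun _ _ => ContDiffAt.sum fun _ _ =>
    (S.contDiffAt_chr hx _ _ _).mul ((hT _).of_le (mod_cast m.le_succ)))

/- The Christoffel terms of `∇T` are of order zero in `T`, so `∇T` agrees with the partial
derivatives of `T` up to terms that already vanish to order `m`. -/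
theorem hasSymbol_zero_succ_iff_cdT (S : IsHypersurface g f (m + 1))
    (hT : ∀ x, f x = 0 → ∀ I, ContDiffAt ℝ (m + 1 : ℕ) (fun y => T y I) x) :
    (∀ I, HasSymbol f (m + 1) (fun y => T y I) 0) ↔
      (∀ I, HasSymbol f m (fun y => T y I) 0) ∧ ∀ I, HasSymbol f m (fun y => cdT g T y I) 0 := by
  have hchr (h0 : ∀ I, HasSymbol f m (fun y => T y I) 0) (I : Fin r → Fin n) (i : Fin n) :
      HasSymbol f m
        (fun y => ∑ a, ∑ k, chr g y k (I a) i * T y (Function.update I a k)) 0 :=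
    (HasSymbol.sum Finset.univ fun a => HasSymbol.sum Finset.univ fun k =>
      (h0 (Function.update I a k)).mul_left fun x hx => S.contDiffAt_chr hx k (I a) i).congr_symbol
        (by simp)
  constructor
  · intro h0
    have h0' (I : Fin r → Fin n) : HasSymbol f m (fun y => T y I) 0 := (h0 I).of_succ
    refine ⟨h0', Fin.snocCases fun I i => ?_⟩
    simp only [cdT_snoc, sub_eq_add_neg]
    exact (((h0 I).2 i).add (hchr h0' I i).neg).congr_symbol (by simp)
  · rintro ⟨h0, hcd⟩ I
    refine ⟨fun x hx => ⟨hT x hx I, (h0 I).eq_zero hx⟩, fun i => ?_⟩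
    have hsum := (hcd (Fin.snoc (α := fun _ => Fin n) I i)).add (hchr h0 I i)
    refine hsum.congr (fun x _ => .of_forall fun y => ?_) (by simp)
    simp only [cdT_snoc, sub_add_cancel]

theorem contDiffAt_itCDh (S : IsHypersurface g f (m + j)) (hx : f x = 0)
    (hh : ∀ a b, ContDiffAt ℝ (m + j : ℕ) (fun y => h y a b) x) (I : Fin (j + 2) → Fin n) :
    ContDiffAt ℝ m (fun y => itCDh g h j y I) x := by
  induction j generalizing m with
  | zero => exact hh _ _
  | succ j ih =>
    rw [← Nat.add_assoc, Nat.add_right_comm] at S hh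
    exact (S.of_le (by omega)).contDiffAt_cdT hx (ih S hh) I

theorem hasSymbol_itCDh_zero_iff (S : IsHypersurface g f (m + j))
    (hh : ∀ x, f x = 0 → ∀ a b, ContDiffAt ℝ (m + j : ℕ) (fun y => h y a b) x) :
    (∀ I, HasSymbol f m (fun y => itCDh g h j y I) 0) ↔
      ∀ k, j ≤ k → k ≤ j + m → ∀ x, f x = 0 → itCDh g h k x = 0 := by
  induction m generalizing j with
  | zero =>
    have hreg : ∀ x, f x = 0 → ∀ I, ContDiffAt ℝ (0 : ℕ) (fun y => itCDh g h j y I) x :=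
      fun x hx => S.contDiffAt_itCDh hx (hh x hx)
    constructor
    · rintro h0 k hjk hkj x hx
      obtain rfl : k = j := le_antisymm hkj hjk
      exact funext fun I => (h0 I).eq_zero hx
    · exact fun h0 I x hx => ⟨hreg x hx I, congrFun (h0 j le_rfl le_rfl x hx) I⟩
  | succ m ih =>
    have hreg : ∀ x, f x = 0 → ∀ I, ContDiffAt ℝ (m + 1 : ℕ) (fun y => itCDh g h j y I) x :=
      fun x hx => S.contDiffAt_itCDh hx (hh x hx)
    have hle : m + j ≤ m + 1 + j := by omega
    have ih_j := ih (S.of_le hle) fun x hx a b => (hh x hx a b).of_le (mod_cast hle)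
    rw [Nat.add_right_comm] at S hh
    rw [(S.of_le (by omega)).hasSymbol_zero_succ_iff_cdT hreg, ih_j]
    change _ ∧ (∀ I, HasSymbol f m (fun y => itCDh g h (j + 1) y I) 0) ↔ _
    rw [ih S hh]
    constructor
    · rintro ⟨hj, hj'⟩ k hjk hkj
      obtain rfl | hjk := hjk.eq_or_lt
      · exact hj j le_rfl (by omega)
      · exact hj' k hjk (by omega)
    · exact fun h0 => ⟨fun k _ _ => h0 k (by omega) (by omega),
        fun k _ _ => h0 k (by omega) (by omega)⟩

theorem hasSymbol_zero_iff_itCDh (S : IsHypersurface g f m)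
    (hh : ∀ x, f x = 0 → ∀ i j, ContDiffAt ℝ m (fun y => h y i j) x) :
    (∀ i j, HasSymbol f m (fun y => h y i j) 0) ↔
      ∀ k ≤ m, ∀ x, f x = 0 → itCDh g h k x = 0 := by
  have hcomp : (∀ i j, HasSymbol f m (fun y => h y i j) 0) ↔
      ∀ I, HasSymbol f m (fun y => itCDh g h 0 y I) 0 :=
    ⟨fun h0 I => h0 (I 0) (I 1), fun h0 i j => h0 ![i, j]⟩
  rw [hcomp, S.hasSymbol_itCDh_zero_iff hh]
  simp only [zero_le, zero_add, true_imp_iff]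

end IsHypersurface

theorem statement14_general (ℓ : ℕ) (S : IsHypersurface g f (ℓ + 2))
    (G : IsGeodesicGauge g h f (ℓ + 2)) :
    ((∀ x, f x = 0 → TangVanishes f x (h x)) ∧
      (∀ x, f x = 0 → TangVanishes f x (sffLin g h f x)) ∧
      ∀ k ≤ ℓ, ∀ x, f x = 0 → TangVanishes f x (nuRicLin g h f k x)) ↔
    ((∀ x, f x = 0 → ∀ i j, h x i j = 0) ∧
      (∀ x, f x = 0 → ∀ I, itCDh g h 1 x I = 0) ∧
      ∀ k ≤ ℓ, ∀ x, f x = 0 → ∀ I, itCDh g h (k + 2) x I = 0) := by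
  have htang := G.tangVanishes_iff_hasSymbol S
  have hcov := S.hasSymbol_zero_iff_itCDh G.contDiffAt
  simp only [Nat.lt_succ_iff] at htang
  rw [htang, hcov]
  constructor
  · intro h0
    exact ⟨fun x hx i j => congrFun (h0 0 (by omega) x hx) ![i, j],
      fun x hx => congrFun (h0 1 (by omega) x hx),
      fun k hk x hx => congrFun (h0 (k + 2) (by omega) x hx)⟩
  · rintro ⟨h0, h1, h2⟩ (_ | _ | k) hk x hx
    · exact funext fun I => h0 x hx (I 0) (I 1)
    · exact funext (h1 x hx)
    · exact funext (h2 k (by omega) x hx)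

end

/-- for `h` in geodesic gauge near the hypersurface `Σ = f⁻¹(0)`
(with parallel unit normal), the boundary conditions
`h^⊤ = 0, A'(h) = 0, ((∇^k_ν Ric)'(h))^⊤ = 0 (k = 0,…,ℓ)` on `Σ`
are equivalent to
`h = 0, ∇h = 0, ∇^{k+2}h = 0 (k = 0,…,ℓ)` on `Σ`. -/
theorem statement14 {n : ℕ} (ℓ : ℕ)
    (g h : Pt n → Fin n → Fin n → ℝ) (f : Pt n → ℝ)
    (W : Set (Pt n)) (hW : IsOpen W) (hSW : f ⁻¹' {(0:ℝ)} ⊆ W)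
    (hgsym : symT g) (hgpos : posdef g)
    (hgan : ∀ i j, AnalyticOnNhd ℝ (fun x => g x i j) W)
    (hfan : AnalyticOnNhd ℝ f W)
    (hreg : ∀ x ∈ f ⁻¹' {(0:ℝ)}, fderiv ℝ f x ≠ 0)
    (hhsym : symT h) (hhreg : ∀ i j, ContDiff ℝ (ℓ+2) (fun x => h x i j))
    -- the unit normal is extended parallelly: `∇_ν ν = 0` near `Σ`
    (hpar : ∀ x ∈ W, ∀ i : Fin n, ∑ j, nuV g f x j * cdVec g (nuV g f) x i j = 0)
    -- geodesic gauge: `h(ν,·) = 0` in a collar neighborhood of `Σ`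
    (hgauge : ∀ x ∈ W, ∀ i : Fin n, ∑ j, h x i j * nuV g f x j = 0) :
    ((∀ x ∈ f ⁻¹' {(0:ℝ)}, ∀ v w : Fin n → ℝ, Tang f x v → Tang f x w →
        ∑ i, ∑ j, h x i j * v i * w j = 0) ∧
     (∀ x ∈ f ⁻¹' {(0:ℝ)}, ∀ v w : Fin n → ℝ, Tang f x v → Tang f x w →
        ∑ i, ∑ j, sffLin g h f x i j * v i * w j = 0) ∧
     (∀ k ≤ ℓ, ∀ x ∈ f ⁻¹' {(0:ℝ)}, ∀ v w : Fin n → ℝ, Tang f x v → Tang f x w →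
        ∑ i, ∑ j, nuRicLin g h f k x i j * v i * w j = 0))
    ↔
    ((∀ x ∈ f ⁻¹' {(0:ℝ)}, ∀ i j, h x i j = 0) ∧
     (∀ x ∈ f ⁻¹' {(0:ℝ)}, ∀ I : Fin 3 → Fin n, itCDh g h 1 x I = 0) ∧
     (∀ k ≤ ℓ, ∀ x ∈ f ⁻¹' {(0:ℝ)}, ∀ I : Fin (k+4) → Fin n,
        itCDh g h (k+2) x I = 0)) := by
  have S : IsHypersurface g f (ℓ + 2) := .of_posdef hgsym hgpos
    (fun x hx => (hfan x (hSW hx)).contDiffAt) (fun x hx i j => (hgan i j x (hSW hx)).contDiffAt)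
    hreg
  have G : IsGeodesicGauge g h f (ℓ + 2) :=
    { contDiffAt := fun x _ i j => mod_cast (hhreg i j).contDiffAt
      symm := fun x _ i j => .of_forall fun y => hhsym y i j
      sum_mul_nuV := fun x hx i => by
        filter_upwards [hW.mem_nhds (hSW hx)] with y hy using hgauge y hy i }
  exact statement14_general ℓ S G
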